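/- arXiv:2405.19239 — 2 statements merged into one kernel-verified Lean document; each statement's English description precedes it below -/
import Mathlib

section
/- Let m : ℕ with m ≥ 1, let a ∈ ℂ with a ≠ 0, and let y₁ ∈ ℂ⟦T⟧ with constant coefficient 0. Set y := T^(2m)·(C(a) + y₁) (so ord y = 2m), x := T^m, and E := C(a)·T^(2m)·(C(a) + y₁)² − y₁, and assume E ≠ 0. Then, with v := ((Dx)² + (Dy)²)·((Dx)·(D³y) − (D³x)·(Dy)) + 3·((Dx)·(D²x) + (Dy)·(D²y))·((D²x)·(Dy) − (Dx)·(D²y)), one has ord v + 6 = 5m + ord E (an equality in ℕ∞, both sides finite). -/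
open PowerSeries

/-- The formal derivative on `ℂ⟦T⟧`. -/
noncomputable def D : PowerSeries ℂ → PowerSeries ℂ := fun f => PowerSeries.derivative ℂ f

/-- The vertex series of the parametrised curve `(x, y)`:
`v = (x'² + y'²)(x'y''' − x'''y') + 3(x'x'' + y'y'')(x''y' − x'y'')`. -/
noncomputable def vser (x y : PowerSeries ℂ) : PowerSeries ℂ :=
  ((D x) ^ 2 + (D y) ^ 2) * (D x * D (D (D y)) - D (D (D x)) * D y) +
    3 * (D x * D (D x) + D y * D (D y)) * (D (D x) * D y - D x * D (D y))

/-- The Euler derivation. -/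
noncomputable def th (f : PowerSeries ℂ) : PowerSeries ℂ := X * D f

lemma D_mul (f g : PowerSeries ℂ) : D (f * g) = D f * g + f * D g := by
  simp only [D, Derivation.leibniz, smul_eq_mul]; ring

lemma D_add (f g : PowerSeries ℂ) : D (f + g) = D f + D g := by
  simp only [D, map_add]

lemma D_sub (f g : PowerSeries ℂ) : D (f - g) = D f - D g := by
  simp only [D, map_sub]

lemma D_X : D (X : PowerSeries ℂ) = 1 := by
  simp [D]

lemma D_C (a : ℂ) : D (C a) = 0 := by
  simp [D]

lemma D_natCast (n : ℕ) : D (n : PowerSeries ℂ) = 0 := by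
  simp [D]

lemma th_mul (f g : PowerSeries ℂ) : th (f * g) = th f * g + f * th g := by
  simp only [th, D_mul]; ring

lemma th_add (f g : PowerSeries ℂ) : th (f + g) = th f + th g := by
  simp only [th, D_add]; ring

lemma th_sub (f g : PowerSeries ℂ) : th (f - g) = th f - th g := by
  simp only [th, D_sub]; ring

lemma th_C (a : ℂ) : th (C a) = 0 := by
  simp only [th, D_C]; ring

lemma th_natCast (n : ℕ) : th (n : PowerSeries ℂ) = 0 := by
  simp only [th, D_natCast]; ring

lemma th_zero : th 0 = 0 := by simpa using th_natCast 0

lemma th_X_pow (n : ℕ) : th ((X : PowerSeries ℂ) ^ n) = (n : PowerSeries ℂ) * X ^ n := by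
  induction n with
  | zero => simpa using th_natCast 1
  | succ n ih =>
    rw [pow_succ, th_mul, ih]
    simp only [th, D_X]; push_cast; ring

lemma th_X_pow_mul (n : ℕ) (f : PowerSeries ℂ) :
    th (X ^ n * f) = X ^ n * (th f + (n : PowerSeries ℂ) * f) := by
  rw [th_mul, th_X_pow]; ring

lemma constantCoeff_th (f : PowerSeries ℂ) : constantCoeff (th f) = 0 := by
  simp [th]

lemma vser_th (x y : PowerSeries ℂ) : X ^ 6 * vser x y =
    ((th x) ^ 2 + (th y) ^ 2) * (th x * th (th (th y)) - th (th (th x)) * th y) +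
    3 * (th x * th (th x) + th y * th (th y)) * (th (th x) * th y - th x * th (th y)) := by
  simp only [vser, th, D_mul, D_add, D_X]; ring

/-- The key identity. -/
lemma key (M : PowerSeries ℂ) (hM : th M = 0) (a : ℂ) (s y G : PowerSeries ℂ) (hs : th s = M * s)
    (hG : G = C a * (s * s + y * y) - y) :
    (1 - 2 * C a * y) * (X ^ 6 * vser s y) =
      M * s * (3 * th y * (th (th y) - M * th y) * (th (th G) - M * th G)
        - (M ^ 2 * s ^ 2 + th y ^ 2) *
          (th (th (th G)) - 3 * M * th (th G) + 2 * M ^ 2 * th G)) := by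
  rw [vser_th, hG]
  simp only [th_sub, th_add, th_mul, hs, th_C, hM, th_zero, zero_mul, zero_add]
  ring

lemma order_zero_of (f : PowerSeries ℂ) (h : constantCoeff f ≠ 0) : f.order = 0 := by
  by_contra h0
  exact h (by simpa using coeff_of_lt_order 0 (by simpa using pos_iff_ne_zero.mpr h0))

/-- **Theorem 2.6(3), exceptional case `n = 2m`.** For the parametrised curve
`γ(t) = (t^m, t^(2m)(a + y₁(t)))` with `a ≠ 0` and `y₁(0) = 0`, setting
`E = a·t^(2m)·(a + y₁)² − y₁ ≠ 0`, the order of the vertex series satisfies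
`V_γ = 3m + 2m + ord E − 6`, i.e. `ord v + 6 = 5m + ord E`. -/
theorem order_vertex_series_exceptional (m : ℕ) (hm : 1 ≤ m) (a : ℂ) (ha : a ≠ 0)
    (y₁ : PowerSeries ℂ) (hy₁ : constantCoeff y₁ = 0)
    (E : PowerSeries ℂ)
    (hE : E = C a * (X : PowerSeries ℂ) ^ (2 * m) * (C a + y₁) ^ 2 - y₁)
    (hE0 : E ≠ 0) :
    (vser ((X : PowerSeries ℂ) ^ m)
        ((X : PowerSeries ℂ) ^ (2 * m) * (C a + y₁))).order + 6
      = ((5 * m : ℕ) : ℕ∞) + E.order := by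
  obtain ⟨e, he⟩ : ∃ e : ℕ, E.order = e :=
    ⟨_, (ENat.natCast_toNat (by simpa [order_eq_top] using hE0)).symm⟩
  obtain ⟨U, hU⟩ : (X : PowerSeries ℂ) ^ e ∣ E := by
    rw [X_pow_dvd_iff]
    intro k hk
    exact coeff_of_lt_order k (by rw [he]; exact_mod_cast hk)
  have hU0 : constantCoeff U ≠ 0 := by
    have h := ((order_eq_nat).1 he).1
    rw [hU] at h
    simpa [coeff_X_pow_mul'] using h
  have hm0 : m ≠ 0 := by omega
  have hEc : constantCoeff E = 0 := by
    rw [hE]; simp [hy₁, hm0]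
  have he0 : e ≠ 0 := by
    rintro rfl
    apply hU0
    rw [hU] at hEc
    simpa using hEc
  set w := C a + y₁ with hw
  set y := (X : PowerSeries ℂ) ^ (2 * m) * w with hy
  have hG : (X : PowerSeries ℂ) ^ (2 * m + e) * U = C a * (X ^ m * X ^ m + y * y) - y := by
    rw [pow_add, mul_assoc, ← hU, hE, hy, hw]; ring
  have hk := key (m : PowerSeries ℂ) (th_natCast m) a (X ^ m) y _ (th_X_pow m) hG
  simp only [hy, th_X_pow, th_add, th_mul, th_natCast, zero_mul, zero_add] at hk
  rw [← hy] at hk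
  set A := th w + ((2 * m : ℕ) : PowerSeries ℂ) * w with hA
  set L2 := th (th U) + (2 * e + 3 * m : ℕ) * th U + ((e + 2 * m) * (e + m) : ℕ) * U with hL2
  set L3 := th (th (th U)) + (3 * e + 3 * m : ℕ) * th (th U)
    + (3 * e ^ 2 + 6 * m * e + 2 * m ^ 2 : ℕ) * th U
    + ((e + 2 * m) * (e + m) * e : ℕ) * U with hL3
  set Z := 3 * (X : PowerSeries ℂ) ^ (2 * m) * A * (th (th w) + ((3 * m : ℕ) : PowerSeries ℂ) * th w + ((2 * m ^ 2 : ℕ) : PowerSeries ℂ) * w) * L2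
    - ((m : PowerSeries ℂ) ^ 2 + X ^ (2 * m) * A ^ 2) * L3 with hZ
  have hmain : (1 - 2 * C a * y) * (X ^ 6 * vser (X ^ m) y)
      = X ^ (5 * m + e) * ((m : PowerSeries ℂ) * Z) := by
    rw [hk, hZ, hL2, hL3, hA]
    push_cast
    ring
  have hc : (1 - 2 * C a * y).order = 0 := by
    apply order_zero_of
    simp [hy, hm0]
  have hZ0 : ((m : PowerSeries ℂ) * Z).order = 0 := by
    apply order_zero_of
    have h1 : constantCoeff L3 = ((e + 2 * m) * (e + m) * e : ℕ) * constantCoeff U := by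
      rw [hL3]
      simp only [map_add, map_mul, constantCoeff_th, map_natCast]
      ring
    have h2 : constantCoeff Z = - ((m : ℂ) ^ 2 * constantCoeff L3) := by
      rw [hZ]
      simp [hm0]
    rw [map_mul, h2, h1, map_natCast]
    have h3 : (((e + 2 * m) * (e + m) * e : ℕ) : ℂ) ≠ 0 := by
      rw [Nat.cast_ne_zero]; positivity
    have h4 : (m : ℂ) ≠ 0 := by exact_mod_cast hm0
    exact mul_ne_zero h4 (neg_ne_zero.mpr (mul_ne_zero (pow_ne_zero 2 h4) (mul_ne_zero h3 hU0)))
  have ho := congrArg PowerSeries.order hmain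
  rw [order_mul, order_mul, order_mul, hc, hZ0, order_X_pow, order_X_pow, zero_add,
    add_zero] at ho
  rw [he, add_comm, ← Nat.cast_add, ← ho]
  rfl
end

section
/- Let n ≥ 1 and f : Fin n → R := MvPolynomial ℂ (Fin 2), and set F := ∏ i, f i. Assume that for every i the quotient A ⧸ Ideal.span {ι(f i), ι(i_{f i})} is a finite-dimensional ℂ-vector space, and that for all i ≠ j the quotient A ⧸ Ideal.span {ι(f i), ι(f j)} is a finite-dimensional ℂ-vector space. Then A ⧸ Ideal.span {ι F, ι(i_F)} is finite-dimensional and m₀(F, i_F) = (∑ i, m₀(f i, i_{f i})) + 6·(∑_{i < j} m₀(f i, f j)). -/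
open MvPolynomial

noncomputable section

/-- Partial derivative with respect to the first variable `X`. -/
def dx (f : MvPolynomial (Fin 2) ℂ) : MvPolynomial (Fin 2) ℂ := pderiv 0 f

/-- Partial derivative with respect to the second variable `Y`. -/
def dy (f : MvPolynomial (Fin 2) ℂ) : MvPolynomial (Fin 2) ℂ := pderiv 1 f

/-- The inflection polynomial `i_f = f_y²·f_xx − 2·f_x·f_y·f_xy + f_x²·f_yy`. -/
def infl (f : MvPolynomial (Fin 2) ℂ) : MvPolynomial (Fin 2) ℂ :=
  (dy f) ^ 2 * dx (dx f) - 2 * dx f * dy f * dy (dx f) + (dx f) ^ 2 * dy (dy f)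

/-- The vertex polynomial
`v_f = (f_x² + f_y²)(f_x³ f_yyy − 3 f_x² f_y f_xyy + 3 f_x f_y² f_xxy − f_y³ f_xxx)
      − 3((f_x² − f_y²) f_xy − f_x f_y (f_xx − f_yy)) · i_f`. -/
def vert (f : MvPolynomial (Fin 2) ℂ) : MvPolynomial (Fin 2) ℂ :=
  ((dx f) ^ 2 + (dy f) ^ 2) *
      ((dx f) ^ 3 * dy (dy (dy f)) - 3 * (dx f) ^ 2 * dy f * dy (dy (dx f)) +
        3 * dx f * (dy f) ^ 2 * dy (dx (dx f)) - (dy f) ^ 3 * dx (dx (dx f))) -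
    3 * (((dx f) ^ 2 - (dy f) ^ 2) * dy (dx f) - dx f * dy f * (dx (dx f) - dy (dy f))) *
      infl f

/-- The canonical map from polynomials to formal power series in two variables. -/
def ι : MvPolynomial (Fin 2) ℂ →+* MvPowerSeries (Fin 2) ℂ :=
  MvPolynomial.coeToMvPowerSeries.ringHom

/-- The local intersection number at the origin of the curves `g = 0` and `h = 0`:
the `ℂ`-dimension of `ℂ⟦x,y⟧/⟨g,h⟩`. -/
def interMult (g h : MvPolynomial (Fin 2) ℂ) : ℕ :=
  Module.finrank ℂ (MvPowerSeries (Fin 2) ℂ ⧸ Ideal.span {ι g, ι h})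

end

lemma aux_X_pow_mem (I : Ideal (MvPowerSeries (Fin 2) ℂ))
    (h : FiniteDimensional ℂ (MvPowerSeries (Fin 2) ℂ ⧸ I)) (t : Fin 2) :
    ∃ N : ℕ, (MvPowerSeries.X t : MvPowerSeries (Fin 2) ℂ) ^ N ∈ I := by
  have hart : IsArtinianRing (MvPowerSeries (Fin 2) ℂ ⧸ I) :=
    IsArtinianRing.of_finite ℂ _
  obtain ⟨N, hN⟩ := IsArtinianRing.isNilpotent_jacobson_bot (R := MvPowerSeries (Fin 2) ℂ ⧸ I)
  refine ⟨N, ?_⟩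
  rw [← Ideal.Quotient.eq_zero_iff_mem, map_pow]
  have hmem : Ideal.Quotient.mk I (MvPowerSeries.X t) ∈
      Ideal.jacobson (⊥ : Ideal (MvPowerSeries (Fin 2) ℂ ⧸ I)) := by
    rw [Ideal.mem_jacobson_bot]
    intro y
    obtain ⟨y, rfl⟩ := Ideal.Quotient.mk_surjective y
    have hu : IsUnit ((MvPowerSeries.X t : MvPowerSeries (Fin 2) ℂ) * y + 1) := by
      rw [MvPowerSeries.isUnit_iff_constantCoeff]
      simp
    simpa using hu.map (Ideal.Quotient.mk I)
  have := Ideal.pow_mem_pow hmem N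
  rw [hN] at this
  simpa using this

lemma aux_X_pow_dvd (N M : ℕ) (s : MvPowerSeries (Fin 2) ℂ)
    (h : (MvPowerSeries.X 0 : MvPowerSeries (Fin 2) ℂ) ^ N ∣ s * MvPowerSeries.X 1 ^ M) :
    (MvPowerSeries.X 0 : MvPowerSeries (Fin 2) ℂ) ^ N ∣ s := by
  rw [MvPowerSeries.X_pow_dvd_iff] at h ⊢
  intro m hm
  have := h (m + Finsupp.single 1 M) (by simpa using hm)
  rw [MvPowerSeries.X_pow_eq, MvPowerSeries.coeff_add_mul_monomial] at this
  simpa using this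

lemma aux_regular (g h b c : MvPowerSeries (Fin 2) ℂ)
    (hf : FiniteDimensional ℂ (MvPowerSeries (Fin 2) ℂ ⧸ Ideal.span {g, h}))
    (e : g * b = h * c) : ∃ s, b = h * s := by
  obtain ⟨N, hN⟩ := aux_X_pow_mem _ hf 0
  obtain ⟨M, hM⟩ := aux_X_pow_mem _ hf 1
  rw [Ideal.mem_span_pair] at hN hM
  obtain ⟨α, β, h1⟩ := hN
  obtain ⟨γ, δ, h2⟩ := hM
  have hX0 : (MvPowerSeries.X 0 : MvPowerSeries (Fin 2) ℂ) ^ N ≠ 0 :=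
    pow_ne_zero _ (fun h0 => by
      have h1 := congrArg (MvPowerSeries.coeff (Finsupp.single 0 1)) h0
      simp [MvPowerSeries.coeff_X] at h1)
  have e1 : b * MvPowerSeries.X 0 ^ N = h * (α * c + β * b) := by
    rw [← h1]; linear_combination α * e
  have e2 : b * MvPowerSeries.X 1 ^ M = h * (γ * c + δ * b) := by
    rw [← h2]; linear_combination γ * e
  by_cases hh : h = 0
  · subst hh
    refine ⟨0, ?_⟩
    rw [zero_mul] at e1
    rcases mul_eq_zero.1 e1 with h | h
    · simp [h]
    · exact absurd h hX0
  · have e3 : (α * c + β * b) * MvPowerSeries.X 1 ^ M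
        = MvPowerSeries.X 0 ^ N * (γ * c + δ * b) := by
      apply mul_left_cancel₀ hh
      linear_combination (-MvPowerSeries.X 1 ^ M) * e1 + (MvPowerSeries.X 0 ^ N) * e2
    obtain ⟨s, hs⟩ := aux_X_pow_dvd N M _ ⟨_, e3⟩
    refine ⟨s, ?_⟩
    apply mul_right_cancel₀ hX0
    rw [e1, hs]; ring

lemma aux_mul (f g h : MvPowerSeries (Fin 2) ℂ)
    (hf : FiniteDimensional ℂ (MvPowerSeries (Fin 2) ℂ ⧸ Ideal.span {f, h}))
    (hg : FiniteDimensional ℂ (MvPowerSeries (Fin 2) ℂ ⧸ Ideal.span {g, h})) :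
    FiniteDimensional ℂ (MvPowerSeries (Fin 2) ℂ ⧸ Ideal.span {f * g, h}) ∧
    Module.finrank ℂ (MvPowerSeries (Fin 2) ℂ ⧸ Ideal.span {f * g, h}) =
      Module.finrank ℂ (MvPowerSeries (Fin 2) ℂ ⧸ Ideal.span {f, h}) +
      Module.finrank ℂ (MvPowerSeries (Fin 2) ℂ ⧸ Ideal.span {g, h}) := by
  have hle1 : Ideal.span {f, h} ≤
      Submodule.comap (LinearMap.mulLeft (MvPowerSeries (Fin 2) ℂ) g)
        (Ideal.span {f * g, h}) := by
    intro a ha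
    obtain ⟨u, v, rfl⟩ := Ideal.mem_span_pair.1 ha
    refine Ideal.mem_span_pair.2 ⟨u, g * v, ?_⟩
    simp only [LinearMap.mulLeft_apply]; ring
  have hle2 : Ideal.span {f * g, h} ≤
      Submodule.comap (LinearMap.id : _ →ₗ[MvPowerSeries (Fin 2) ℂ] _)
        (Ideal.span {g, h}) := by
    intro a ha
    obtain ⟨u, v, rfl⟩ := Ideal.mem_span_pair.1 ha
    refine Ideal.mem_span_pair.2 ⟨u * f, v, ?_⟩
    ring
  let φ := (Submodule.mapQ _ _ _ hle1).restrictScalars ℂ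
  let ψ := (Submodule.mapQ _ _ _ hle2).restrictScalars ℂ
  have hφ : Function.Injective φ := by
    rw [injective_iff_map_eq_zero]
    intro a ha
    obtain ⟨a, rfl⟩ := Submodule.Quotient.mk_surjective _ a
    have ha' : g * a ∈ Ideal.span {f * g, h} := (Submodule.Quotient.mk_eq_zero _).1 ha
    rw [Submodule.Quotient.mk_eq_zero]
    obtain ⟨u, v, e⟩ := Ideal.mem_span_pair.1 ha'
    obtain ⟨s, hs⟩ := aux_regular g h (a - f * u) v hg (by linear_combination -e)
    exact Ideal.mem_span_pair.2 ⟨u, s, by linear_combination -hs⟩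
  have hψ : Function.Surjective ψ := by
    intro a
    obtain ⟨a, rfl⟩ := Submodule.Quotient.mk_surjective _ a
    exact ⟨Submodule.Quotient.mk a, rfl⟩
  have hex : Function.Exact φ ψ := by
    intro a
    obtain ⟨a, rfl⟩ := Submodule.Quotient.mk_surjective _ a
    constructor
    · intro ha
      have ha' : a ∈ Ideal.span {g, h} := (Submodule.Quotient.mk_eq_zero _).1 ha
      obtain ⟨u, v, e⟩ := Ideal.mem_span_pair.1 ha'
      refine ⟨Submodule.Quotient.mk u, ?_⟩
      refine (Submodule.Quotient.eq _).2 ?_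
      refine Ideal.mem_span_pair.2 ⟨0, -v, ?_⟩
      simp only [LinearMap.mulLeft_apply]
      linear_combination -e
    · rintro ⟨b, hb⟩
      obtain ⟨b, rfl⟩ := Submodule.Quotient.mk_surjective _ b
      rw [← hb]
      refine (Submodule.Quotient.mk_eq_zero _).2 ?_
      exact Ideal.mem_span_pair.2 ⟨b, 0, by simp [mul_comm]⟩
  have hfin : FiniteDimensional ℂ (MvPowerSeries (Fin 2) ℂ ⧸ Ideal.span {f * g, h}) :=
    Module.Finite.of_exact hex hψ
  refine ⟨hfin, ?_⟩
  have h1 := ψ.finrank_range_add_finrank_ker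
  rw [LinearMap.range_eq_top.2 hψ, finrank_top, hex.linearMap_ker_eq,
    LinearMap.finrank_range_of_inj hφ] at h1
  rw [← h1, add_comm]

/-- finiteness of the local intersection number -/
def FinI (g h : MvPolynomial (Fin 2) ℂ) : Prop :=
  FiniteDimensional ℂ (MvPowerSeries (Fin 2) ℂ ⧸ Ideal.span {ι g, ι h})

lemma FinI_comm {g h : MvPolynomial (Fin 2) ℂ} (H : FinI g h) : FinI h g := by
  unfold FinI at *
  rwa [Ideal.span_pair_comm]

lemma interMult_comm (g h : MvPolynomial (Fin 2) ℂ) : interMult g h = interMult h g := by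
  unfold interMult
  rw [Ideal.span_pair_comm]

lemma inter_mul {f g h : MvPolynomial (Fin 2) ℂ} (hf : FinI f h) (hg : FinI g h) :
    FinI (f * g) h ∧ interMult (f * g) h = interMult f h + interMult g h := by
  unfold FinI interMult
  rw [map_mul]
  exact aux_mul _ _ _ hf hg

lemma inter_mul_right {f g h : MvPolynomial (Fin 2) ℂ} (hf : FinI h f) (hg : FinI h g) :
    FinI h (f * g) ∧ interMult h (f * g) = interMult h f + interMult h g := by
  obtain ⟨a, b⟩ := inter_mul (FinI_comm hf) (FinI_comm hg)
  refine ⟨FinI_comm a, ?_⟩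
  rw [interMult_comm, b, interMult_comm f, interMult_comm g]

lemma inter_one (g h : MvPolynomial (Fin 2) ℂ) (H : g = 1) :
    FinI g h ∧ interMult g h = 0 := by
  have e : Ideal.span {ι g, ι h} = ⊤ := by
    rw [Ideal.eq_top_iff_one]
    apply Ideal.subset_span
    simp [H]
  unfold FinI interMult
  rw [e]
  have : Subsingleton (MvPowerSeries (Fin 2) ℂ ⧸ (⊤ : Ideal (MvPowerSeries (Fin 2) ℂ))) :=
    Ideal.Quotient.subsingleton_iff.2 rfl
  exact ⟨inferInstance, Module.finrank_zero_of_subsingleton⟩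

lemma inter_prod (g : MvPolynomial (Fin 2) ℂ) (n : ℕ) (f : Fin n → MvPolynomial (Fin 2) ℂ)
    (H : ∀ i, FinI g (f i)) :
    FinI g (∏ i, f i) ∧ interMult g (∏ i, f i) = ∑ i, interMult g (f i) := by
  induction n with
  | zero =>
    obtain ⟨a, b⟩ := inter_one (∏ i, f i) g (by simp)
    refine ⟨FinI_comm a, ?_⟩
    rw [interMult_comm, b]; simp
  | succ n ih =>
    obtain ⟨a, b⟩ := ih (fun i => f i.succ) (fun i => H _)
    rw [Fin.prod_univ_succ, Fin.sum_univ_succ, ← b]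
    exact inter_mul_right (H 0) a

lemma infl_mul (f g : MvPolynomial (Fin 2) ℂ) :
    ∃ k, infl (f * g) = g ^ 3 * infl f + k * f := by
  have hmod : infl (f * g) - g ^ 3 * infl f ∈ Ideal.span {f} := by
    have hff : Ideal.Quotient.mk (Ideal.span {f}) f = 0 :=
      Ideal.Quotient.eq_zero_iff_mem.2 (Ideal.mem_span_singleton_self f)
    rw [← Ideal.Quotient.eq_zero_iff_mem]
    simp only [infl, dx, dy, Derivation.leibniz, map_add, smul_eq_mul, map_sub, map_mul,
      map_pow, map_ofNat, hff]
    ring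
  obtain ⟨k, hk⟩ := Ideal.mem_span_singleton'.1 hmod
  exact ⟨k, by linear_combination -hk⟩

lemma inter_add_mul (f h k : MvPolynomial (Fin 2) ℂ) :
    (FinI f (h + k * f) ↔ FinI f h) ∧ interMult f (h + k * f) = interMult f h := by
  unfold FinI interMult
  rw [map_add, map_mul, Ideal.span_pair_add_mul_left]
  exact ⟨Iff.rfl, rfl⟩

lemma inter_half {f g : MvPolynomial (Fin 2) ℂ} (hf : FinI f (infl f)) (hfg : FinI f g) :
    FinI f (infl (f * g)) ∧
      interMult f (infl (f * g)) = interMult f (infl f) + 3 * interMult f g := by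
  obtain ⟨k, hk⟩ := infl_mul f g
  rw [hk, (inter_add_mul _ _ _).1, (inter_add_mul _ _ _).2]
  obtain ⟨a, b⟩ := inter_mul_right hfg hfg
  obtain ⟨a', b'⟩ := inter_mul_right a hfg
  obtain ⟨a'', b''⟩ := inter_mul_right a' hf
  have e : g ^ 3 = g * g * g := by ring
  rw [e]
  refine ⟨a'', ?_⟩
  rw [b'', b', b]; ring

lemma infl_two {f g : MvPolynomial (Fin 2) ℂ} (hf : FinI f (infl f)) (hg : FinI g (infl g))
    (hfg : FinI f g) :
    FinI (f * g) (infl (f * g)) ∧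
      interMult (f * g) (infl (f * g)) =
        interMult f (infl f) + interMult g (infl g) + 6 * interMult f g := by
  obtain ⟨a, b⟩ := inter_half hf hfg
  obtain ⟨a', b'⟩ := inter_half hg (FinI_comm hfg)
  rw [mul_comm g f] at a' b'
  obtain ⟨c, d⟩ := inter_mul a a'
  refine ⟨c, ?_⟩
  rw [d, b, b', interMult_comm g f]; ring

lemma infl_prod (n : ℕ) (f : Fin n → MvPolynomial (Fin 2) ℂ)
    (hI : ∀ i, FinI (f i) (infl (f i))) (hm : ∀ i j, i ≠ j → FinI (f i) (f j)) :
    FinI (∏ i, f i) (infl (∏ i, f i)) ∧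
    interMult (∏ i, f i) (infl (∏ i, f i))
      = (∑ i, interMult (f i) (infl (f i)))
        + 6 * ∑ i, ∑ j ∈ Finset.univ.filter (fun j => i < j), interMult (f i) (f j) := by
  induction n with
  | zero =>
    obtain ⟨a, b⟩ := inter_one (∏ i, f i) (infl (∏ i, f i)) (by simp)
    refine ⟨a, ?_⟩
    rw [b]; simp
  | succ n ih =>
    obtain ⟨a, b⟩ := ih (fun i => f i.succ) (fun i => hI _)
      (fun i j hij => hm _ _ (fun h => hij (Fin.succ_injective _ h)))
    obtain ⟨c, d⟩ := inter_prod (f 0) n (fun i => f i.succ)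
      (fun i => hm _ _ (Fin.succ_ne_zero i).symm)
    obtain ⟨u, v⟩ := infl_two (hI 0) a c
    rw [Fin.prod_univ_succ]
    refine ⟨u, ?_⟩
    rw [v, b, d]
    simp only [Finset.sum_filter, Fin.sum_univ_succ, Fin.succ_lt_succ_iff, lt_irrefl, if_false,
      Fin.succ_pos, if_true, Fin.not_lt_zero, zero_add]
    ring

/-- **Theorem 3.3 (inflection part).** If `F = f₁ ⋯ f_n` where each `I_{f_i}` is finite
and the pairwise intersection numbers `m₀(f_i, f_j)` are finite, then `I_F` is finite and
`I_F = Σᵢ I_{f_i} + 6·Σ_{i<j} m₀(f_i, f_j)`. -/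
theorem inflection_number_of_product
    (n : ℕ) (hn : 1 ≤ n) (f : Fin n → MvPolynomial (Fin 2) ℂ)
    (hI : ∀ i, FiniteDimensional ℂ
      (MvPowerSeries (Fin 2) ℂ ⧸ Ideal.span {ι (f i), ι (infl (f i))}))
    (hm : ∀ i j, i ≠ j → FiniteDimensional ℂ
      (MvPowerSeries (Fin 2) ℂ ⧸ Ideal.span {ι (f i), ι (f j)})) :
    FiniteDimensional ℂ (MvPowerSeries (Fin 2) ℂ ⧸
        Ideal.span {ι (∏ i, f i), ι (infl (∏ i, f i))}) ∧
    interMult (∏ i, f i) (infl (∏ i, f i))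
      = (∑ i, interMult (f i) (infl (f i)))
        + 6 * ∑ i, ∑ j ∈ Finset.univ.filter (fun j => i < j), interMult (f i) (f j) := by
  exact infl_prod n f hI hm
end
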